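/- In any complemented HMS model, for every individual i ∈ I and every event E, awareness of implicit knowledge of an event equals awareness of the event: A_i(L_i(E)) = A_i(E). -/

import Mathlib

/-!
If `L(E)` is nonempty, its base-space equals that of `E`, so both awareness operators coincide.
Take `ω ∈ L(E)`, and let `S Φ`, `S Ψ` be the base-spaces of `E`, `L(E)`. An event contains the
projection of each of its states to its base-space, and has states only in spaces above it
(`HMSFrame.IsEvent.proj_mem`). Hence `ω_Ψ ∈ L(E)`, and reflexivity of `Λ` puts `ω_Ψ` in `E`, so
`Φ ⊆ Ψ`. Conversely `Λ(ω_Φ) = (Λ(ω))_Φ ⊆ E` because `Λ(ω) ⊆ E`, so `ω_Φ ∈ L(E)` and `Ψ ⊆ Φ`.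
-/

/-- The frame underlying HMS (Heifetz–Meier–Schipper) unawareness models: a complete
lattice of nonempty pairwise disjoint state spaces `S Φ` indexed by the subsets
`Φ ⊆ At` of atomic formulas (ordered by inclusion of the index), together with
commuting surjective projections `r Φ Ψ : S Φ → S Ψ` for `Ψ ⊆ Φ`. -/
structure HMSFrame (At : Type*) (Ω : Type*) where
  S : Set At → Set Ω
  S_nonempty : ∀ Φ : Set At, (S Φ).Nonempty
  S_disjoint : ∀ ⦃Φ Φ' : Set At⦄, Φ ≠ Φ' → Disjoint (S Φ) (S Φ')
  S_cover : ∀ ω : Ω, ∃ Φ : Set At, ω ∈ S Φ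
  r : Set At → Set At → Ω → Ω
  r_mem : ∀ ⦃Φ Ψ : Set At⦄, Ψ ⊆ Φ → ∀ ⦃ω : Ω⦄, ω ∈ S Φ → r Φ Ψ ω ∈ S Ψ
  r_surjOn : ∀ ⦃Φ Ψ : Set At⦄, Ψ ⊆ Φ → Set.SurjOn (r Φ Ψ) (S Φ) (S Ψ)
  r_id : ∀ (Φ : Set At), ∀ ω ∈ S Φ, r Φ Φ ω = ω
  r_comp : ∀ ⦃Φ Ψ Υ : Set At⦄, Υ ⊆ Ψ → Ψ ⊆ Φ → ∀ ω ∈ S Φ, r Ψ Υ (r Φ Ψ ω) = r Φ Υ ω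

variable {At Ω : Type*}

/-- `D^↑`, for a subset `D` of the space `S Φ`: all extensions of states in `D` to
(weakly) more expressive spaces. -/
def HMSFrame.up (F : HMSFrame At Ω) (Φ : Set At) (D : Set Ω) : Set Ω :=
  {ω : Ω | ∃ Ψ : Set At, Φ ⊆ Ψ ∧ ω ∈ F.S Ψ ∧ F.r Ψ Φ ω ∈ D}

/-- `E` is an event with base-space `S Φ` (and base some `D ⊆ S Φ`). -/
def HMSFrame.IsEvent (F : HMSFrame At Ω) (Φ : Set At) (E : Set Ω) : Prop :=
  ∃ D, D ⊆ F.S Φ ∧ E = F.up Φ D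

/-- Negation `¬E := (S Φ \ D)^↑` of an event `E` with base-space `S Φ`
(note `S Φ \ E = S Φ \ D` for an event `E` with base `D ⊆ S Φ`). -/
def HMSFrame.neg (F : HMSFrame At Ω) (Φ : Set At) (E : Set Ω) : Set Ω :=
  F.up Φ (F.S Φ \ E)

/-- Properties of the (explicit) possibility correspondence of HMS models:
nonemptiness, Confinement, Generalized Reflexivity, Stationarity,
Projections Preserve Ignorance, and Projections Preserve Knowledge. -/
structure IsPossibility (F : HMSFrame At Ω) (Pi : Ω → Set Ω) : Prop where
  nonempty : ∀ ω : Ω, (Pi ω).Nonempty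
  confinement : ∀ ⦃Φ : Set At⦄ ⦃ω : Ω⦄, ω ∈ F.S Φ → ∃ Ψ, Ψ ⊆ Φ ∧ Pi ω ⊆ F.S Ψ
  genRefl : ∀ ⦃Υ : Set At⦄ ⦃ω : Ω⦄, Pi ω ⊆ F.S Υ → ω ∈ F.up Υ (Pi ω)
  stationarity : ∀ ⦃ω ω' : Ω⦄, ω' ∈ Pi ω → Pi ω' = Pi ω
  projIgnorance : ∀ ⦃Φ Ψ : Set At⦄ ⦃ω : Ω⦄, ω ∈ F.S Φ → Ψ ⊆ Φ →
    ∀ ⦃Υ Υ' : Set At⦄, Pi ω ⊆ F.S Υ → Pi (F.r Φ Ψ ω) ⊆ F.S Υ' →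
      F.up Υ (Pi ω) ⊆ F.up Υ' (Pi (F.r Φ Ψ ω))
  projKnowledge : ∀ ⦃Φ Ψ Υ : Set At⦄ ⦃ω : Ω⦄, Υ ⊆ Ψ → Ψ ⊆ Φ → ω ∈ F.S Φ →
    Pi ω ⊆ F.S Ψ → F.r Ψ Υ '' Pi ω = Pi (F.r Φ Υ ω)

/-- Properties of an implicit possibility correspondence `La` relative to the
explicit possibility correspondence `Pi`: Reflexivity, Stationarity, Projections
Preserve Implicit Knowledge (whose statement `(Λ(ω))_Ψ = Λ(ω_Ψ)` presupposes that
the projection of `Λ(ω)` is defined, i.e. `Λ(ω) ⊆ S Φ` for `ω ∈ S Φ`),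
Explicit Measurability, and Implicit Measurability. -/
structure IsImplicit (F : HMSFrame At Ω) (Pi La : Ω → Set Ω) : Prop where
  refl : ∀ ω : Ω, ω ∈ La ω
  stationarity : ∀ ⦃ω ω' : Ω⦄, ω' ∈ La ω → La ω' = La ω
  projImplicit : ∀ ⦃Φ : Set At⦄ ⦃ω : Ω⦄, ω ∈ F.S Φ →
    La ω ⊆ F.S Φ ∧ ∀ ⦃Ψ : Set At⦄, Ψ ⊆ Φ → F.r Φ Ψ '' La ω = La (F.r Φ Ψ ω)
  explicitMeas : ∀ ⦃ω ω' : Ω⦄, ω' ∈ La ω → Pi ω' = Pi ω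
  implicitMeas : ∀ ⦃Φ Ψ : Set At⦄ ⦃ω ω' : Ω⦄, ω ∈ F.S Φ → Pi ω ⊆ F.S Ψ →
    ω' ∈ Pi ω → La ω' = F.r Φ Ψ '' La ω

/-- Properties of the primitive implicit possibility correspondence `La` of an
implicit knowledge-based HMS model: nonemptiness, Reflexivity, Stationarity, and
Projections Preserve Implicit Knowledge. -/
structure IsImplicitStar (F : HMSFrame At Ω) (La : Ω → Set Ω) : Prop where
  nonempty : ∀ ω : Ω, (La ω).Nonempty
  refl : ∀ ω : Ω, ω ∈ La ω
  stationarity : ∀ ⦃ω ω' : Ω⦄, ω' ∈ La ω → La ω' = La ω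
  projImplicit : ∀ ⦃Φ : Set At⦄ ⦃ω : Ω⦄, ω ∈ F.S Φ →
    La ω ⊆ F.S Φ ∧ ∀ ⦃Ψ : Set At⦄, Ψ ⊆ Φ → F.r Φ Ψ '' La ω = La (F.r Φ Ψ ω)

/-- Property (O) (Lack of Conception): the awareness level at `ω ∈ S Φ` (encoded
by its index `al ω ⊆ At`, so that the awareness level is the space `S (al ω)`)
is weakly less expressive than `S Φ`. -/
def PropO (F : HMSFrame At Ω) (al : Ω → Set At) : Prop :=
  ∀ ⦃Φ : Set At⦄ ⦃ω : Ω⦄, ω ∈ F.S Φ → al ω ⊆ Φ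

/-- Property (I) (Awareness Measurability). -/
def PropI (F : HMSFrame At Ω) (La : Ω → Set Ω) (al : Ω → Set At) : Prop :=
  ∀ ⦃ω ω' : Ω⦄, ω' ∈ La ω → al ω' = al ω

/-- Property (II): if `ω ∈ S Φ` and `S Ψ ⪯ α(ω)` then `α(ω_Ψ) = S Ψ`. -/
def PropII (F : HMSFrame At Ω) (al : Ω → Set At) : Prop :=
  ∀ ⦃Φ Ψ : Set At⦄ ⦃ω : Ω⦄, ω ∈ F.S Φ → Ψ ⊆ al ω → Ψ ⊆ Φ → al (F.r Φ Ψ ω) = Ψ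

/-- Property (III): if `ω ∈ S Φ` and `α(ω) ⪯ S Ψ ⪯ S Φ` then `α(ω_Ψ) = α(ω)`. -/
def PropIII (F : HMSFrame At Ω) (al : Ω → Set At) : Prop :=
  ∀ ⦃Φ Ψ : Set At⦄ ⦃ω : Ω⦄, ω ∈ F.S Φ → al ω ⊆ Ψ → Ψ ⊆ Φ → al (F.r Φ Ψ ω) = al ω

/-- Property (IV): if `ω ∈ S Φ` and `Ψ ⊆ Φ` then `α(ω) ⪰ α(ω_Ψ)`. -/
def PropIV (F : HMSFrame At Ω) (al : Ω → Set At) : Prop :=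
  ∀ ⦃Φ Ψ : Set At⦄ ⦃ω : Ω⦄, ω ∈ F.S Φ → Ψ ⊆ Φ → al (F.r Φ Ψ ω) ⊆ al ω

/-- `PiS` is the explicit possibility correspondence derived from the implicit
possibility correspondence `La` and the awareness function `al`:
`Π*(ω_Ψ) := (Λ*(ω))_{α(ω_Ψ)}` for all `ω ∈ S Φ` and `Ψ ⊆ Φ`. -/
def DerivedPi (F : HMSFrame At Ω) (La : Ω → Set Ω) (al : Ω → Set At)
    (PiS : Ω → Set Ω) : Prop :=
  ∀ ⦃Φ Ψ : Set At⦄ ⦃ω : Ω⦄, ω ∈ F.S Φ → Ψ ⊆ Φ →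
    PiS (F.r Φ Ψ ω) = F.r Φ (al (F.r Φ Ψ ω)) '' La ω

/-- The (explicit) knowledge operator `K(E) := {ω : Π(ω) ⊆ E}` (as a set this
agrees with the definition with default value `∅^{S(E)}` on the vacuous case). -/
def Kop (F : HMSFrame At Ω) (Pi : Ω → Set Ω) (E : Set Ω) : Set Ω :=
  {ω : Ω | Pi ω ⊆ E}

/-- The implicit knowledge operator `L(E) := {ω : Λ(ω) ⊆ E}`. -/
def Lop (F : HMSFrame At Ω) (La : Ω → Set Ω) (E : Set Ω) : Set Ω :=
  {ω : Ω | La ω ⊆ E}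

/-- The awareness operator `A(E) := {ω : S_{Π(ω)} ⪰ S(E)}`, applied to an event
with base-space `S Φ`. -/
def Aop (F : HMSFrame At Ω) (Pi : Ω → Set Ω) (Φ : Set At) : Set Ω :=
  {ω : Ω | ∃ Ψ : Set At, Φ ⊆ Ψ ∧ Pi ω ⊆ F.S Ψ}

/-- The unawareness operator `U(E) := ¬A(E)`, applied to an event with
base-space `S Φ` (recall `A(E)` is an `S(E)`-based event). -/
def Uop (F : HMSFrame At Ω) (Pi : Ω → Set Ω) (Φ : Set At) : Set Ω :=
  F.neg Φ (Aop F Pi Φ)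

/-- The awareness operator `A*(E) := {ω : α(ω) ⪰ S(E)}` defined from the
awareness function, applied to an event with base-space `S Φ`. -/
def AopStar (al : Ω → Set At) (Φ : Set At) : Set Ω :=
  {ω : Ω | Φ ⊆ al ω}

/-- An HMS model: the frame together with a possibility correspondence for each
individual and a valuation mapping each atomic formula to an event. -/
structure HMSModel (At Ω I : Type*) extends HMSFrame At Ω where
  Pi : I → Ω → Set Ω
  Pi_poss : ∀ i : I, IsPossibility toHMSFrame (Pi i)
  val : At → Set Ω
  val_event : ∀ p : At, ∃ Φ : Set At, toHMSFrame.IsEvent Φ (val p)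

/-- A complemented HMS model: an HMS model together with an implicit possibility
correspondence for each individual. -/
structure CompHMSModel (At Ω I : Type*) extends HMSModel At Ω I where
  La : I → Ω → Set Ω
  La_impl : ∀ i : I, IsImplicit toHMSModel.toHMSFrame (Pi i) (La i)

/-- An implicit knowledge-based HMS model: the frame together with, for each
individual, a primitive implicit possibility correspondence and an awareness
function satisfying (O)-(IV), and a valuation mapping atoms to events. -/
structure ImpHMSModel (At Ω I : Type*) extends HMSFrame At Ω where
  LaS : I → Ω → Set Ω
  LaS_impl : ∀ i : I, IsImplicitStar toHMSFrame (LaS i)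
  al : I → Ω → Set At
  al_O : ∀ i : I, PropO toHMSFrame (al i)
  al_I : ∀ i : I, PropI toHMSFrame (LaS i) (al i)
  al_II : ∀ i : I, PropII toHMSFrame (al i)
  al_III : ∀ i : I, PropIII toHMSFrame (al i)
  al_IV : ∀ i : I, PropIV toHMSFrame (al i)
  val : At → Set Ω
  val_event : ∀ p : At, ∃ Φ : Set At, toHMSFrame.IsEvent Φ (val p)

theorem HMSFrame.index_unique {At Ω : Type*} (F : HMSFrame At Ω) {Φ Ψ : Set At} {ω : Ω}
    (h : ω ∈ F.S Φ) (h' : ω ∈ F.S Ψ) : Φ = Ψ := by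
  by_contra hne
  exact Set.disjoint_left.mp (F.S_disjoint hne) h h'

theorem HMSFrame.IsEvent.proj_mem {At Ω : Type*} {F : HMSFrame At Ω} {Φ Θ : Set At}
    {E : Set Ω} (hE : F.IsEvent Φ E) {ω : Ω} (hω : ω ∈ F.S Θ) (h : ω ∈ E) :
    Φ ⊆ Θ ∧ F.r Θ Φ ω ∈ E := by
  obtain ⟨D, hD, rfl⟩ := hE
  obtain ⟨Θ', hΦ, hω', hr⟩ := h
  obtain rfl := F.index_unique hω hω'
  refine ⟨hΦ, Φ, subset_rfl, hD hr, ?_⟩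
  rwa [F.r_id Φ _ (hD hr)]

/-- In any complemented HMS model, for every individual `i ∈ I` and
every event `E`, awareness of implicit knowledge of an event equals awareness of
the event: `A_i(L_i(E)) = A_i(E)`. Here `Ψ` is the base-space of the event
`L_i(E)` (for nonempty `L_i(E)` it is its unique base-space; for the vacuous case
the definition of `L_i` gives the default base-space `S(E) = S_Φ`). -/
theorem awareness_of_implicit_knowledge
    {At Ω I : Type*} [Nonempty At] [Nonempty I]
    (M : CompHMSModel At Ω I) (i : I) (Φ Ψ : Set At) (E : Set Ω)
    (hE : M.toHMSFrame.IsEvent Φ E)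
    (hL : M.toHMSFrame.IsEvent Ψ (Lop M.toHMSFrame (M.La i) E))
    (hbase : (Lop M.toHMSFrame (M.La i) E).Nonempty ∨ Ψ = Φ) :
    Aop M.toHMSFrame (M.Pi i) Ψ = Aop M.toHMSFrame (M.Pi i) Φ := by
  rcases hbase with ⟨ω, hω⟩ | rfl
  · obtain ⟨Θ, hΘ⟩ := M.S_cover ω
    have hLa : M.La i ω ⊆ E := hω
    obtain ⟨hLaΘ, hproj⟩ := (M.La_impl i).projImplicit hΘ
    have hΦΘ := (hE.proj_mem hΘ (hLa ((M.La_impl i).refl ω))).1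
    obtain ⟨hΨΘ, hωΨ⟩ := hL.proj_mem hΘ hω
    have hΦΨ : Φ ⊆ Ψ :=
      (hE.proj_mem (M.r_mem hΨΘ hΘ) (hωΨ ((M.La_impl i).refl _))).1
    have hωΦ : M.r Θ Φ ω ∈ Lop M.toHMSFrame (M.La i) E := by
      change M.La i (M.r Θ Φ ω) ⊆ E
      rw [← hproj hΦΘ]
      rintro _ ⟨x, hx, rfl⟩
      exact (hE.proj_mem (hLaΘ hx) (hLa hx)).2
    have hΨΦ : Ψ ⊆ Φ := (hL.proj_mem (M.r_mem hΦΘ hΘ) hωΦ).1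
    rw [hΨΦ.antisymm hΦΨ]
  · rfl
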